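/- Let A and B be C*-algebras, let I be a closed two-sided ideal of A and J a closed two-sided ideal of B, and let π : A → A/I and ρ : B → B/J be the canonical quotient maps. Then the induced map π ⊗̂ ρ : A ⊗̂ B → (A/I) ⊗̂ (B/J) is a quotient map (it maps the open unit ball of A ⊗̂ B onto the open unit ball of (A/I) ⊗̂ (B/J)), and its kernel equals A ⊗̂ J + I ⊗̂ B. -/

import Mathlib

open scoped TensorProduct
open Pointwise

universe u

noncomputable section

/-- A C⋆-norm on a complex `*`-algebra.  On a matrix algebra over a C⋆-algebra such a
norm is unique, namely the canonical C⋆-norm. -/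
structure IsCStarNorm {M : Type*} [NonUnitalRing M] [StarRing M] [Module ℂ M]
    (N : M → ℝ) : Prop where
  add_le : ∀ x y, N (x + y) ≤ N x + N y
  smul_eq : ∀ (c : ℂ) (x : M), N (c • x) = ‖c‖ * N x
  eq_zero_of : ∀ x, N x = 0 → x = 0
  mul_le : ∀ x y, N (x * y) ≤ N x * N y
  star_mul_self : ∀ x, N (star x * x) = N x * N x

/-- The operator space projective tensor norm `‖·‖_∧` on the algebraic tensor product
`A ⊗ B`, relative to given families of matrix norms on `A` and `B`:
`‖u‖_∧ = inf { ‖α‖ ‖v‖ ‖w‖ ‖β‖ : u = α (v ⊗ w) β }` where `v ∈ M_p(A)`, `w ∈ M_q(B)`,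
`α ∈ M_{1,pq}(ℂ)` and `β ∈ M_{pq,1}(ℂ)` (row and column vectors carrying the Euclidean
norm, which is their norm as scalar matrices). -/
noncomputable def osProjNorm {A B : Type u}
    [AddCommGroup A] [Module ℂ A] [AddCommGroup B] [Module ℂ B]
    (NA : ∀ p : ℕ, Matrix (Fin p) (Fin p) A → ℝ)
    (NB : ∀ q : ℕ, Matrix (Fin q) (Fin q) B → ℝ) (u : A ⊗[ℂ] B) : ℝ :=
  sInf { r : ℝ | ∃ (p q : ℕ) (α : Fin p × Fin q → ℂ) (v : Matrix (Fin p) (Fin p) A)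
      (w : Matrix (Fin q) (Fin q) B) (β : Fin p × Fin q → ℂ),
      u = ∑ ik : Fin p × Fin q, ∑ jl : Fin p × Fin q,
            (α ik * β jl) • (v ik.1 jl.1 ⊗ₜ[ℂ] w ik.2 jl.2) ∧
      r = Real.sqrt (∑ ik, ‖α ik‖ ^ 2) * NA p v * NB q w *
            Real.sqrt (∑ jl, ‖β jl‖ ^ 2) }

/-- `X` is a completion of the algebraic tensor product `A ⊗ B` with respect to the
norm `ν`, via the (necessarily isometric) dense embedding `ι`, and the multiplication and
involution of `X` are the canonical ones induced from `A` and `B`.  Applied with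
`ν = osProjNorm NA NB` (for the canonical matrix C⋆-norms `NA`, `NB`) this characterizes
the Banach `*`-algebra `A ⊗̂ B` (the operator space projective tensor product) up to
isometric `*`-isomorphism; applied with `ν = bsProjNorm` it characterizes the Banach
space projective tensor product `A ⊗_γ B`. -/
structure IsTensorCompletion {A B : Type u} [NonUnitalRing A] [StarRing A] [Module ℂ A]
    [NonUnitalRing B] [StarRing B] [Module ℂ B] (ν : A ⊗[ℂ] B → ℝ)
    (X : Type u) [NonUnitalNormedRing X] [StarRing X] [NormedSpace ℂ X] [CompleteSpace X]
    (ι : A ⊗[ℂ] B →ₗ[ℂ] X) : Prop where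
  norm_eq : ∀ u, ‖ι u‖ = ν u
  dense : DenseRange ι
  mul_tmul : ∀ (a c : A) (b d : B),
    ι (a ⊗ₜ[ℂ] b) * ι (c ⊗ₜ[ℂ] d) = ι ((a * c) ⊗ₜ[ℂ] (b * d))
  star_tmul : ∀ (a : A) (b : B), star (ι (a ⊗ₜ[ℂ] b)) = ι (star a ⊗ₜ[ℂ] star b)

/-- The product ideal `S ⊗̂ T`: the closure in `X` (a completion of `A ⊗ B`) of the span of
elementary tensors `a ⊗ b` with `a ∈ S`, `b ∈ T`. -/
def tensorIdeal {A B : Type u} [NonUnitalRing A] [StarRing A] [Module ℂ A]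
    [NonUnitalRing B] [StarRing B] [Module ℂ B]
    {X : Type u} [NonUnitalNormedRing X] [StarRing X] [NormedSpace ℂ X] [CompleteSpace X]
    (ι : A ⊗[ℂ] B →ₗ[ℂ] X) (S : Set A) (T : Set B) : Set X :=
  closure (ι '' (Submodule.span ℂ (Set.image2 (fun a b => a ⊗ₜ[ℂ] b) S T)))

/-- A closed prime (two-sided) ideal of a Banach algebra: a proper closed two-sided ideal `K`
such that whenever the product of two closed two-sided ideals is contained in `K`, one of them
is contained in `K`. -/
def IsClosedPrimeIdeal {Y : Type u} [NonUnitalNormedRing Y] (K : TwoSidedIdeal Y) : Prop :=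
  IsClosed (K : Set Y) ∧ (K : Set Y) ≠ Set.univ ∧
    ∀ I J : TwoSidedIdeal Y, IsClosed (I : Set Y) → IsClosed (J : Set Y) →
      (∀ x ∈ I, ∀ y ∈ J, x * y ∈ K) → (I : Set Y) ⊆ (K : Set Y) ∨ (J : Set Y) ⊆ (K : Set Y)

/-- An irreducible continuous `*`-representation of a Banach `*`-algebra `Y` on a complex
Hilbert space. -/
structure IrreducibleRepOn (Y : Type u)
    [NonUnitalNormedRing Y] [StarRing Y] [NormedSpace ℂ Y] where
  H : Type u
  [normH : NormedAddCommGroup H]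
  [ipsH : InnerProductSpace ℂ H]
  [csH : CompleteSpace H]
  π : Y →⋆ₙₐ[ℂ] (H →L[ℂ] H)
  continuous : Continuous π
  nonzero : ∃ y, π y ≠ 0
  irreducible : ∀ S : Submodule ℂ H, IsClosed (S : Set H) →
    (∀ y : Y, ∀ v ∈ S, π y v ∈ S) → S = ⊥ ∨ S = ⊤

/-- A primitive ideal: the kernel of an irreducible `*`-representation. -/
def IsPrimitiveIdeal {Y : Type u} [NonUnitalNormedRing Y] [StarRing Y] [NormedSpace ℂ Y]
    (K : TwoSidedIdeal Y) : Prop :=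
  ∃ ρ : IrreducibleRepOn Y, ∀ y, y ∈ K ↔ ρ.π y = 0

/-- A subset `K` of a ring is modular (as an ideal) if there is a relative unit `e`
with `x * e - x ∈ K` and `e * x - x ∈ K` for every `x`. -/
def IsModularIdealSet {Y : Type u} [NonUnitalRing Y] (K : Set Y) : Prop :=
  ∃ e : Y, ∀ x : Y, x * e - x ∈ K ∧ e * x - x ∈ K

/-- A maximal modular (two-sided) ideal: a modular ideal which is proper and maximal among
proper two-sided ideals. -/
def IsMaximalModularIdeal {Y : Type u} [NonUnitalRing Y] (K : TwoSidedIdeal Y) : Prop :=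
  IsModularIdealSet (K : Set Y) ∧ (K : Set Y) ≠ Set.univ ∧
    ∀ L : TwoSidedIdeal Y, (K : Set Y) ⊆ (L : Set Y) →
      (L : Set Y) = (K : Set Y) ∨ (L : Set Y) = Set.univ

/-- The operator norm of a `p × p` matrix of bounded operators on a Hilbert space `H`,
viewed as an operator on the `ℓ²`-direct sum `H ⊕ ⋯ ⊕ H`. -/
noncomputable def opMatrixNorm {H : Type u} [NormedAddCommGroup H] [InnerProductSpace ℂ H]
    {p : ℕ} (T : Matrix (Fin p) (Fin p) (H →L[ℂ] H)) : ℝ :=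
  sSup { r : ℝ | ∃ x : Fin p → H, (∑ i, ‖x i‖ ^ 2) ≤ 1 ∧
      r = Real.sqrt (∑ i, ‖∑ j, (T i j) (x j)‖ ^ 2) }

/-- An operator algebra structure on a Banach algebra `Y`: a bicontinuous algebra
homomorphism of `Y` into the bounded operators on some Hilbert space. -/
structure OperatorAlgebraEmbedding (Y : Type u) [NonUnitalNormedRing Y] [NormedSpace ℂ Y] where
  H : Type u
  [normH : NormedAddCommGroup H]
  [ipsH : InnerProductSpace ℂ H]
  [csH : CompleteSpace H]
  ρ : Y →ₙₐ[ℂ] (H →L[ℂ] H)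
  c : ℝ
  C : ℝ
  c_pos : 0 < c
  lower : ∀ y, c * ‖y‖ ≤ ‖ρ y‖
  upper : ∀ y, ‖ρ y‖ ≤ C * ‖y‖

/-- The matrix norms on `Y` induced by an operator algebra embedding, giving `Y` its
operator space structure: the norm of `v ∈ M_p(Y)` is the operator norm of the matrix
of operators obtained by applying the embedding entrywise. -/
noncomputable def OperatorAlgebraEmbedding.matrixNorm {Y : Type u}
    [NonUnitalNormedRing Y] [NormedSpace ℂ Y] (e : OperatorAlgebraEmbedding Y)
    (p : ℕ) (v : Matrix (Fin p) (Fin p) Y) : ℝ :=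
  letI := e.normH; letI := e.ipsH
  opMatrixNorm (v.map e.ρ)

/-- The Banach space projective tensor norm `‖·‖_γ` on the algebraic tensor product. -/
noncomputable def bsProjNorm {A B : Type u} [NonUnitalNormedRing A] [NormedSpace ℂ A]
    [NonUnitalNormedRing B] [NormedSpace ℂ B] (u : A ⊗[ℂ] B) : ℝ :=
  sInf { r : ℝ | ∃ (n : ℕ) (a : Fin n → A) (b : Fin n → B),
      u = ∑ i, a i ⊗ₜ[ℂ] b i ∧ r = ∑ i, ‖a i‖ * ‖b i‖ }

/-- A C⋆-algebra `A` is subhomogeneous if there is `n : ℕ` bounding the (finite)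
dimensions of all its irreducible `*`-representations. -/
def IsSubhomogeneous (A : Type u) [NonUnitalCStarAlgebra A] : Prop :=
  ∃ n : ℕ, ∀ ρ : IrreducibleRepOn A,
    letI := ρ.normH
    letI := ρ.ipsH
    FiniteDimensional ℂ ρ.H ∧ Module.finrank ℂ ρ.H ≤ n

/-!
A C⋆-norm on a C⋆-algebra is unique, so the matrix norms are the canonical ones. Hence `π` and `ρ`
contract all matrix norms, and by functional calculus every matrix over a quotient has a lift of no
larger norm. Lifting the two matrices of a factorization `α (v ⊗ w) β` shows that the algebraic map
`π ⊗ ρ` is a quotient map for `‖·‖_∧`. By approximation the same holds for `π ⊗̂ ρ`, and its kernel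
is the closure of the algebraic kernel `A ⊗ J + I ⊗ B`. This closure is `A ⊗̂ J + I ⊗̂ B` because
the latter sum of closed ideals is itself closed, thanks to bounded approximate units of `A` and
`J`.
-/

open Filter Topology

namespace IsCStarNorm

section Basic

variable {M : Type*} [NonUnitalRing M] [StarRing M] [Module ℂ M] {N : M → ℝ}

theorem map_zero (hN : IsCStarNorm N) : N 0 = 0 := by
  simpa using hN.smul_eq 0 0

theorem nonneg (hN : IsCStarNorm N) (x : M) : 0 ≤ N x := by
  have hneg : N (-x) = N x := by simpa using hN.smul_eq (-1) x
  have hadd := hN.add_le x (-x)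
  rw [add_neg_cancel, hN.map_zero, hneg] at hadd
  linarith

theorem eq_of_star_mul_self_eq (hN : IsCStarNorm N) {x y : M}
    (h : star y * y = star x * x) : N y = N x := by
  rw [← mul_self_inj (hN.nonneg y) (hN.nonneg x), ← hN.star_mul_self, h, hN.star_mul_self]

end Basic

end IsCStarNorm

theorem exists_mem_unitary_add_star_eq_two_smul {A : Type*} [CStarAlgebra A] {h : A}
    (hh : IsSelfAdjoint h) (hle : ‖h‖ ≤ 1) :
    ∃ u ∈ unitary A, u + star u = (2 : ℂ) • h := by
  let _ := CStarAlgebra.spectralOrder A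
  let _ := CStarAlgebra.spectralOrderedRing A
  have hs : IsSelfAdjoint (CFC.sqrt (1 - h ^ 2)) := (CFC.sqrt_nonneg _).isSelfAdjoint
  refine ⟨_, hh.self_add_I_smul_cfcSqrt_sub_sq_mem_unitary h hle, ?_⟩
  rw [star_add, star_smul, hh.star_eq, hs.star_eq, Complex.star_def, Complex.conj_I, neg_smul,
    two_smul]
  abel

namespace IsCStarNorm

variable {M : Type*} [NonUnitalCStarAlgebra M] {N : M → ℝ}

theorem exists_unitary_mul_inr_eq (hN : IsCStarNorm N) {u : Unitization ℂ M}
    (hu : u ∈ unitary (Unitization ℂ M)) (x : M) :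
    ∃ y : M, (y : Unitization ℂ M) = u * x ∧ N y = N x := by
  have hy : ((u.fst • x + u.snd * x : M) : Unitization ℂ M) = u * x := by
    conv_rhs => rw [← Unitization.inl_fst_add_inr_snd_eq u]
    simp [add_mul, Unitization.inl_mul_inr]
  refine ⟨u.fst • x + u.snd * x, hy, hN.eq_of_star_mul_self_eq ?_⟩
  apply Unitization.inr_injective (R := ℂ)
  rw [Unitization.inr_mul, Unitization.inr_star, hy, star_mul, mul_assoc, ← mul_assoc (star u),
    Unitary.star_mul_self_of_mem hu, one_mul, Unitization.inr_mul, Unitization.inr_star]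

theorem mul_le_of_isSelfAdjoint_of_norm_le_one (hN : IsCStarNorm N) {h : M}
    (hh : IsSelfAdjoint h) (hle : ‖h‖ ≤ 1) (x : M) : N (h * x) ≤ N x := by
  -- `h` is the average of a unitary of the unitization and its adjoint, and multiplication by
  -- either of these preserves `N`.
  obtain ⟨u, hu, hu_add⟩ := exists_mem_unitary_add_star_eq_two_smul
    (h := (h : Unitization ℂ M)) (hh.inr ℂ) (by rwa [Unitization.norm_inr])
  obtain ⟨y, hy, hNy⟩ := hN.exists_unitary_mul_inr_eq hu x
  obtain ⟨z, hz, hNz⟩ := hN.exists_unitary_mul_inr_eq (Unitary.star_mem hu) x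
  have hyz : y + z = (2 : ℂ) • (h * x) := by
    apply Unitization.inr_injective (R := ℂ)
    rw [Unitization.inr_add, hy, hz, ← add_mul, hu_add, smul_mul_assoc, Unitization.inr_smul,
      Unitization.inr_mul]
  have hadd := hN.add_le y z
  rw [hyz, hN.smul_eq, hNy, hNz, Complex.norm_ofNat] at hadd
  linarith

theorem le_norm_of_isSelfAdjoint (hN : IsCStarNorm N) {h : M} (hh : IsSelfAdjoint h) :
    N h ≤ ‖h‖ := by
  obtain rfl | h0 := eq_or_ne h 0
  · simp [hN.map_zero]
  have hpos : 0 < ‖h‖ := norm_pos_iff.2 h0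
  have hscaled := hN.mul_le_of_isSelfAdjoint_of_norm_le_one (h := ‖h‖⁻¹ • h)
    ((IsSelfAdjoint.all ‖h‖⁻¹).smul hh) (by simp [norm_smul, hpos.ne']) h
  have hmul : N h * N h ≤ ‖h‖ * N h := by
    rwa [smul_mul_assoc, ← Complex.coe_smul, hN.smul_eq, Complex.norm_real, norm_inv, norm_norm,
      inv_mul_le_iff₀ hpos, ← congrArg (· * h) hh.star_eq, hN.star_mul_self] at hscaled
  by_contra! hlt
  exact hmul.not_gt (mul_lt_mul_of_pos_right hlt (hpos.trans hlt))

theorem le_norm (hN : IsCStarNorm N) (x : M) : N x ≤ ‖x‖ := by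
  rw [mul_self_le_mul_self_iff (hN.nonneg x) (norm_nonneg x), ← hN.star_mul_self,
    ← CStarRing.norm_star_mul_self]
  exact hN.le_norm_of_isSelfAdjoint (.star_mul_self x)

end IsCStarNorm

theorem exists_continuous_mul_max_zero_abs_sub_eq {c : ℝ} (hc : 0 < c) :
    ∃ g : ℝ → ℝ, Continuous g ∧ g 0 = 0 ∧ (∀ t, |g t| ≤ c⁻¹) ∧
      ∀ t, t * max 0 (|t| - c) * g t = max 0 (|t| - c) := by
  have hmax (t : ℝ) : 0 < max |t| c := lt_max_of_lt_right hc
  refine ⟨fun t ↦ t / max |t| c ^ 2, by fun_prop (disch := exact fun t ↦ (pow_pos (hmax t) 2).ne'),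
    by simp, fun t ↦ ?_, fun t ↦ ?_⟩
  · rw [abs_div, abs_pow, abs_of_pos (hmax t), div_le_iff₀ (pow_pos (hmax t) 2),
      le_inv_mul_iff₀ hc, sq]
    exact mul_le_mul (le_max_right _ _) (le_max_left _ _) (abs_nonneg t) (hmax t).le
  · rcases le_total |t| c with htc | htc
    · simp [max_eq_left (sub_nonpos.2 htc)]
    · have ht : t ≠ 0 := abs_pos.1 (hc.trans_le htc)
      beta_reduce
      rw [max_eq_left htc, sq_abs, max_eq_right (sub_nonneg.2 htc)]
      field_simp

namespace IsCStarNorm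

variable {M : Type*} [NonUnitalCStarAlgebra M] {N : M → ℝ}

theorem cfcₙ_eq_zero_of_lt (hN : IsCStarNorm N) {h : M} (hh : IsSelfAdjoint h) {c : ℝ}
    (hc : N h < c) : cfcₙ (fun t : ℝ ↦ max 0 (|t| - c)) h = 0 := by
  -- `f(h) = h f(h) g(h)` with `N h < c` and `‖g(h)‖ ≤ c⁻¹`, so `N (f(h))` must vanish.
  have hc0 : 0 < c := (hN.nonneg h).trans_lt hc
  obtain ⟨g, hg, hg0, hg_le, hfg⟩ := exists_continuous_mul_max_zero_abs_sub_eq hc0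
  set f : ℝ → ℝ := fun t ↦ max 0 (|t| - c) with hf
  have hf0 : f 0 = 0 := by simp [hf, hc0.le]
  have hfactor : h * cfcₙ f h * cfcₙ g h = cfcₙ f h := by
    conv_lhs => enter [1, 1]; rw [← cfcₙ_id' ℝ h]
    rw [← cfcₙ_mul .., ← cfcₙ_mul .., show (fun t ↦ t * f t * g t) = f from funext hfg]
  have hle : N (cfcₙ f h) ≤ N h * N (cfcₙ f h) * c⁻¹ :=
    calc N (cfcₙ f h) = N (h * cfcₙ f h * cfcₙ g h) := by rw [hfactor]
      _ ≤ N (h * cfcₙ f h) * N (cfcₙ g h) := hN.mul_le _ _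
      _ ≤ N h * N (cfcₙ f h) * c⁻¹ := by
        gcongr
        · exact hN.nonneg _
        · exact mul_nonneg (hN.nonneg _) (hN.nonneg _)
        · exact hN.mul_le _ _
        · exact (hN.le_norm _).trans (norm_cfcₙ_le fun t _ ↦ hg_le t)
  rw [le_mul_inv_iff₀ hc0] at hle
  exact hN.eq_zero_of _ (by nlinarith [hN.nonneg (cfcₙ f h)])

theorem norm_le_of_isSelfAdjoint (hN : IsCStarNorm N) {h : M} (hh : IsSelfAdjoint h) :
    ‖h‖ ≤ N h := by
  refine le_of_forall_gt_imp_ge_of_dense fun c hc ↦ ?_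
  have hc0 : 0 < c := (hN.nonneg h).trans_lt hc
  rw [← cfcₙ_id' ℝ h]
  refine norm_cfcₙ_le fun t ht ↦ ?_
  have hft := norm_apply_le_norm_cfcₙ (fun t : ℝ ↦ max 0 (|t| - c)) h ht (hf₀ := by simp [hc0.le])
  rw [hN.cfcₙ_eq_zero_of_lt hh hc, norm_zero] at hft
  exact sub_nonpos.1 ((le_max_right _ _).trans ((Real.le_norm_self _).trans hft))

theorem eq_norm (hN : IsCStarNorm N) (x : M) : N x = ‖x‖ := by
  refine (hN.le_norm x).antisymm ?_
  rw [mul_self_le_mul_self_iff (norm_nonneg x) (hN.nonneg x), ← hN.star_mul_self,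
    ← CStarRing.norm_star_mul_self]
  exact hN.norm_le_of_isSelfAdjoint (.star_mul_self x)

end IsCStarNorm

theorem exists_continuous_eq_one_and_abs_mul_le {c : ℝ} (hc : 0 < c) :
    ∃ k : ℝ → ℝ, Continuous k ∧ (∀ t, |t| ≤ c → k t = 1) ∧ ∀ t, |k t * (t * k t)| ≤ c := by
  have hmax (t : ℝ) : 0 < max |t| c := lt_max_of_lt_right hc
  refine ⟨fun t ↦ √(c / max |t| c), by fun_prop (disch := exact fun t ↦ (hmax t).ne'),
    fun t ht ↦ by simp [max_eq_right ht, hc.ne'], fun t ↦ ?_⟩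
  rw [mul_left_comm, Real.mul_self_sqrt (div_pos hc (hmax t)).le, abs_mul,
    abs_of_pos (div_pos hc (hmax t)), mul_div_left_comm]
  exact mul_le_of_le_one_right hc.le ((div_le_one (hmax t)).2 (le_max_left _ _))

open scoped CStarAlgebra in
theorem exists_map_eq_one_and_norm_mul_le {A B : Type*} [CStarAlgebra A] [CStarAlgebra B]
    (φ : A →⋆ₐ[ℂ] B) {x : A} (hx : φ x ≠ 0) : ∃ s, φ s = 1 ∧ ‖x * s‖ ≤ ‖φ x‖ := by
  have hc : 0 < ‖φ x‖ * ‖φ x‖ := by positivity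
  -- `k` is `1` on the spectrum of `φ (star x * x)`, while `t * k t ^ 2` is capped at `‖φ x‖ ^ 2`.
  obtain ⟨k, hk, hk_one, hk_le⟩ := exists_continuous_eq_one_and_abs_mul_le hc
  refine ⟨cfc k (star x * x), ?_, ?_⟩
  · have : Nontrivial B := ⟨φ x, 0, hx⟩
    rw [StarAlgHomClass.map_cfc (S := ℂ) φ k (star x * x) hk.continuousOn (map_continuous φ)
      (.star_mul_self x) ((IsSelfAdjoint.star_mul_self x).map φ), map_mul, map_star,
      ← cfc_one ℝ (star (φ x) * φ x)]
    refine cfc_congr fun t ht ↦ hk_one t ?_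
    rw [← CStarRing.norm_star_mul_self]
    exact spectrum.norm_le_norm_of_mem ht
  · rw [mul_self_le_mul_self_iff (norm_nonneg _) (norm_nonneg _), ← CStarRing.norm_star_mul_self,
      star_mul, (cfc_predicate k (star x * x) : IsSelfAdjoint _).star_eq, mul_assoc,
      ← mul_assoc (star x)]
    nth_rw 2 [← cfc_id' ℝ (star x * x)]
    rw [← cfc_mul .., ← cfc_mul ..]
    exact norm_cfc_le hc.le fun t _ ↦ hk_le t

theorem exists_map_eq_and_norm_le {A B : Type*} [NonUnitalCStarAlgebra A]
    [NonUnitalCStarAlgebra B] (φ : A →⋆ₙₐ[ℂ] B) (hφ : Function.Surjective φ) (y : B) :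
    ∃ x, φ x = y ∧ ‖x‖ ≤ ‖y‖ := by
  obtain rfl | hy := eq_or_ne y 0
  · exact ⟨0, map_zero φ, norm_zero.trans_le (norm_nonneg _)⟩
  obtain ⟨x, rfl⟩ := hφ y
  obtain ⟨s, hs, hle⟩ := exists_map_eq_one_and_norm_mul_le (Unitization.starMap φ)
    (x := (x : Unitization ℂ A))
    (by rwa [Unitization.starMap_inr, ← Unitization.inr_zero ℂ, Unitization.inr_injective.ne_iff])
  have hxs : ((s.fst • x + x * s.snd : A) : Unitization ℂ A) = x * s := by
    conv_rhs => rw [← Unitization.inl_fst_add_inr_snd_eq s]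
    simp [mul_add, Unitization.inr_mul_inl]
  refine ⟨s.fst • x + x * s.snd, ?_, ?_⟩
  · apply Unitization.inr_injective (R := ℂ)
    rw [← Unitization.starMap_inr, hxs, map_mul, hs, mul_one, Unitization.starMap_inr]
  · rwa [← hxs, Unitization.starMap_inr, Unitization.norm_inr, Unitization.norm_inr] at hle

namespace IsCStarNorm

variable {A A' n : Type*} [NonUnitalCStarAlgebra A] [NonUnitalCStarAlgebra A'] [Fintype n]
  {N : Matrix n n A → ℝ} {N' : Matrix n n A' → ℝ}

theorem eq_norm_ofMatrix [PartialOrder A] [StarOrderedRing A] (hN : IsCStarNorm N)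
    (v : Matrix n n A) : N v = ‖CStarMatrix.ofMatrix v‖ := by
  have hN_symm : IsCStarNorm fun w : CStarMatrix n n A ↦ N (CStarMatrix.ofMatrix.symm w) :=
    { add_le _ _ := hN.add_le _ _
      smul_eq _ _ := hN.smul_eq _ _
      eq_zero_of _ := hN.eq_zero_of _
      mul_le _ _ := hN.mul_le _ _
      star_mul_self _ := hN.star_mul_self _ }
  exact hN_symm.eq_norm (CStarMatrix.ofMatrix v)

theorem matrix_map_le (hN : IsCStarNorm N) (hN' : IsCStarNorm N') (φ : A →⋆ₙₐ[ℂ] A')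
    (v : Matrix n n A) : N' (v.map φ) ≤ N v := by
  let _ := CStarAlgebra.spectralOrder A
  let _ := CStarAlgebra.spectralOrder A'
  have := CStarAlgebra.spectralOrderedRing A
  have := CStarAlgebra.spectralOrderedRing A'
  rw [hN.eq_norm_ofMatrix, hN'.eq_norm_ofMatrix]
  exact NonUnitalStarAlgHom.norm_apply_le (CStarMatrix.mapₙₐ φ) (CStarMatrix.ofMatrix v)

theorem exists_matrix_map_eq_and_le (hN : IsCStarNorm N) (hN' : IsCStarNorm N')
    (φ : A →⋆ₙₐ[ℂ] A') (hφ : Function.Surjective φ) (v' : Matrix n n A') :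
    ∃ v : Matrix n n A, v.map φ = v' ∧ N v ≤ N' v' := by
  let _ := CStarAlgebra.spectralOrder A
  let _ := CStarAlgebra.spectralOrder A'
  have := CStarAlgebra.spectralOrderedRing A
  have := CStarAlgebra.spectralOrderedRing A'
  have hmap : Function.Surjective (CStarMatrix.mapₙₐ (n := n) φ) := fun w ↦
    ⟨w.map (Function.surjInv hφ), by ext i j; simp [Function.surjInv_eq]⟩
  obtain ⟨v, hv, hle⟩ := exists_map_eq_and_norm_le _ hmap (CStarMatrix.ofMatrix v')
  refine ⟨CStarMatrix.ofMatrix.symm v, hv, ?_⟩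
  rwa [hN.eq_norm_ofMatrix, hN'.eq_norm_ofMatrix, Equiv.apply_symm_apply]

theorem apply_of_const [Unique n] (hN : IsCStarNorm N) (a : A) :
    N (Matrix.of fun _ _ ↦ a) = ‖a‖ := by
  obtain rfl : ‹Fintype n› = Unique.fintype := Subsingleton.elim _ _
  let _ := CStarAlgebra.spectralOrder A
  have := CStarAlgebra.spectralOrderedRing A
  rw [hN.eq_norm_ofMatrix]
  exact NonUnitalStarAlgHom.norm_map (CStarMatrix.toOneByOne n ℂ A)
    (CStarMatrix.toOneByOne n ℂ A).injective a

end IsCStarNorm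

theorem exists_filter_tendsto_mul {A : Type*} [NonUnitalCStarAlgebra A]
    (S : NonUnitalStarSubalgebra ℂ A) (hS : IsClosed (S : Set A)) :
    ∃ l : Filter {e : A // e ∈ S ∧ ‖e‖ ≤ 1}, l.NeBot ∧
      ∀ s ∈ S, Tendsto (s * ·.1) l (𝓝 s) := by
  let _ : NonUnitalCStarAlgebra S := NonUnitalStarSubalgebra.nonUnitalCStarAlgebra S
  let _ := CStarAlgebra.spectralOrder S
  have := CStarAlgebra.spectralOrderedRing S
  have hl := CStarAlgebra.increasingApproximateUnit (A := S)
  have := hl.neBot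
  have hle : (CStarAlgebra.approximateUnit S).map (↑) ≤ 𝓟 {e : A | e ∈ S ∧ ‖e‖ ≤ 1} :=
    le_principal_iff.2 (mem_map.2 (hl.eventually_norm.mono fun e he ↦ ⟨e.2, he⟩))
  refine ⟨.comap Subtype.val ((CStarAlgebra.approximateUnit S).map (↑)),
    comap_coe_neBot_of_le_principal hle, fun s hs ↦ ?_⟩
  refine Tendsto.comp (g := (s * ·)) (tendsto_map'_iff.2 ?_) tendsto_comap
  exact (continuous_subtype_val.tendsto _).comp (hl.tendsto_mul_left ⟨s, hs⟩)

section OsProjNorm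

variable {A B A' B' : Type u}
  {NA : ∀ p : ℕ, Matrix (Fin p) (Fin p) A → ℝ} {NB : ∀ q : ℕ, Matrix (Fin q) (Fin q) B → ℝ}
  {NA' : ∀ p : ℕ, Matrix (Fin p) (Fin p) A' → ℝ} {NB' : ∀ q : ℕ, Matrix (Fin q) (Fin q) B' → ℝ}
  {p q : ℕ}

/-- The number `‖α‖ ‖v‖ ‖w‖ ‖β‖` which the factorization `α (v ⊗ w) β` contributes to the infimum
defining `osProjNorm`. -/
def osFactorCost (NA : ∀ p : ℕ, Matrix (Fin p) (Fin p) A → ℝ)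
    (NB : ∀ q : ℕ, Matrix (Fin q) (Fin q) B → ℝ) (α : Fin p × Fin q → ℂ)
    (v : Matrix (Fin p) (Fin p) A) (w : Matrix (Fin q) (Fin q) B) (β : Fin p × Fin q → ℂ) : ℝ :=
  √(∑ ik, ‖α ik‖ ^ 2) * NA p v * NB q w * √(∑ jl, ‖β jl‖ ^ 2)

theorem osFactorCost_nonneg (hNA : ∀ p v, 0 ≤ NA p v) (hNB : ∀ q w, 0 ≤ NB q w)
    (α : Fin p × Fin q → ℂ) (v : Matrix (Fin p) (Fin p) A) (w : Matrix (Fin q) (Fin q) B)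
    (β : Fin p × Fin q → ℂ) : 0 ≤ osFactorCost NA NB α v w β := by
  have := hNA p v
  have := hNB q w
  unfold osFactorCost
  positivity

theorem osFactorCost_mono {v : Matrix (Fin p) (Fin p) A} {w : Matrix (Fin q) (Fin q) B}
    {v' : Matrix (Fin p) (Fin p) A'} {w' : Matrix (Fin q) (Fin q) B'}
    (hw : 0 ≤ NB q w) (hv' : 0 ≤ NA' p v') (hvv' : NA p v ≤ NA' p v') (hww' : NB q w ≤ NB' q w')
    (α β : Fin p × Fin q → ℂ) :
    osFactorCost NA NB α v w β ≤ osFactorCost NA' NB' α v' w' β := by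
  unfold osFactorCost
  gcongr

variable [AddCommGroup A'] [Module ℂ A'] [AddCommGroup B'] [Module ℂ B']
  [AddCommGroup A] [Module ℂ A] [AddCommGroup B] [Module ℂ B]

/-- The element `α (v ⊗ w) β` of `A ⊗ B` occurring in the definition of `osProjNorm`, for a row
vector `α`, matrices `v` over `A` and `w` over `B`, and a column vector `β`. -/
def osFactor (α : Fin p × Fin q → ℂ) (v : Matrix (Fin p) (Fin p) A)
    (w : Matrix (Fin q) (Fin q) B) (β : Fin p × Fin q → ℂ) : A ⊗[ℂ] B :=
  ∑ ik : Fin p × Fin q, ∑ jl : Fin p × Fin q,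
    (α ik * β jl) • (v ik.1 jl.1 ⊗ₜ[ℂ] w ik.2 jl.2)

theorem map_osFactor (f : A →ₗ[ℂ] A') (g : B →ₗ[ℂ] B') (α : Fin p × Fin q → ℂ)
    (v : Matrix (Fin p) (Fin p) A) (w : Matrix (Fin q) (Fin q) B) (β : Fin p × Fin q → ℂ) :
    TensorProduct.map f g (osFactor α v w β) = osFactor α (v.map f) (w.map g) β := by
  simp only [osFactor, map_sum, map_smul, TensorProduct.map_tmul, Matrix.map_apply]

theorem sum_tmul_eq_osFactor (a : Fin p → A) (b : Fin p → B) :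
    ∑ i, a i ⊗ₜ[ℂ] b i =
      osFactor (fun ik ↦ if ik.1 = ik.2 then 1 else 0) (.diagonal a) (.diagonal b)
        (fun jl ↦ if jl.1 = jl.2 then 1 else 0) := by
  simp [osFactor, Fintype.sum_prod_type, Matrix.diagonal_apply, TensorProduct.ite_tmul,
    TensorProduct.tmul_ite]

theorem exists_eq_osFactor (u : A ⊗[ℂ] B) :
    ∃ (p q : ℕ) (α : Fin p × Fin q → ℂ) (v : Matrix (Fin p) (Fin p) A)
      (w : Matrix (Fin q) (Fin q) B) (β : Fin p × Fin q → ℂ), u = osFactor α v w β := by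
  obtain ⟨n, a, b, rfl⟩ := TensorProduct.exists_sum_tmul_eq u
  exact ⟨n, n, _, _, _, _, sum_tmul_eq_osFactor a b⟩

theorem osProjNorm_osFactor_le (hNA : ∀ p v, 0 ≤ NA p v) (hNB : ∀ q w, 0 ≤ NB q w)
    (α : Fin p × Fin q → ℂ) (v : Matrix (Fin p) (Fin p) A) (w : Matrix (Fin q) (Fin q) B)
    (β : Fin p × Fin q → ℂ) :
    osProjNorm NA NB (osFactor α v w β) ≤ osFactorCost NA NB α v w β := by
  refine csInf_le ⟨0, ?_⟩ ⟨p, q, α, v, w, β, rfl, rfl⟩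
  rintro _ ⟨p, q, α, v, w, β, -, rfl⟩
  exact osFactorCost_nonneg hNA hNB α v w β

theorem exists_eq_osFactor_and_cost_lt {u : A ⊗[ℂ] B} {r : ℝ} (hr : osProjNorm NA NB u < r) :
    ∃ (p q : ℕ) (α : Fin p × Fin q → ℂ) (v : Matrix (Fin p) (Fin p) A)
      (w : Matrix (Fin q) (Fin q) B) (β : Fin p × Fin q → ℂ),
      u = osFactor α v w β ∧ osFactorCost NA NB α v w β < r := by
  obtain ⟨p₀, q₀, α₀, v₀, w₀, β₀, hu₀⟩ := exists_eq_osFactor u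
  obtain ⟨_, ⟨p, q, α, v, w, β, hu, rfl⟩, hlt⟩ :=
    exists_lt_of_csInf_lt (by exact ⟨_, p₀, q₀, α₀, v₀, w₀, β₀, hu₀, rfl⟩) hr
  exact ⟨p, q, α, v, w, β, hu, hlt⟩

theorem osProjNorm_tmul_le (hNA : ∀ p v, 0 ≤ NA p v) (hNB : ∀ q w, 0 ≤ NB q w) (a : A) (b : B) :
    osProjNorm NA NB (a ⊗ₜ[ℂ] b) ≤ NA 1 (.of fun _ _ ↦ a) * NB 1 (.of fun _ _ ↦ b) := by
  simpa [osFactor, osFactorCost] using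
    osProjNorm_osFactor_le (p := 1) (q := 1) hNA hNB (fun _ ↦ 1) (.of fun _ _ ↦ a)
      (.of fun _ _ ↦ b) (fun _ ↦ 1)

theorem osProjNorm_map_le (hNA : ∀ p v, 0 ≤ NA p v)
    (hNA' : ∀ p v, 0 ≤ NA' p v) (hNB' : ∀ q w, 0 ≤ NB' q w) {f : A →ₗ[ℂ] A'} {g : B →ₗ[ℂ] B'}
    (hf : ∀ p v, NA' p (v.map f) ≤ NA p v) (hg : ∀ q w, NB' q (w.map g) ≤ NB q w)
    (u : A ⊗[ℂ] B) :
    osProjNorm NA' NB' (TensorProduct.map f g u) ≤ osProjNorm NA NB u := by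
  refine le_of_forall_gt fun r hr ↦ ?_
  obtain ⟨p, q, α, v, w, β, rfl, hlt⟩ := exists_eq_osFactor_and_cost_lt hr
  rw [map_osFactor]
  exact (osProjNorm_osFactor_le hNA' hNB' ..).trans_lt
    ((osFactorCost_mono (hNB' _ _) (hNA _ _) (hf p v) (hg q w) α β).trans_lt hlt)

theorem exists_map_eq_and_osProjNorm_lt (hNA : ∀ p v, 0 ≤ NA p v) (hNB : ∀ q w, 0 ≤ NB q w)
    (hNA' : ∀ p v, 0 ≤ NA' p v) {f : A →ₗ[ℂ] A'} {g : B →ₗ[ℂ] B'}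
    (hf : ∀ p v', ∃ v, Matrix.map v f = v' ∧ NA p v ≤ NA' p v')
    (hg : ∀ q w', ∃ w, Matrix.map w g = w' ∧ NB q w ≤ NB' q w')
    {u' : A' ⊗[ℂ] B'} {r : ℝ} (hr : osProjNorm NA' NB' u' < r) :
    ∃ u, TensorProduct.map f g u = u' ∧ osProjNorm NA NB u < r := by
  obtain ⟨p, q, α, v', w', β, rfl, hlt⟩ := exists_eq_osFactor_and_cost_lt hr
  obtain ⟨v, rfl, hv⟩ := hf p v'
  obtain ⟨w, rfl, hw⟩ := hg q w'
  exact ⟨osFactor α v w β, map_osFactor f g α v w β,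
    (osProjNorm_osFactor_le hNA hNB ..).trans_lt
      ((osFactorCost_mono (hNB _ _) (hNA' _ _) hv hw α β).trans_lt hlt)⟩

end OsProjNorm

section CStarAlgebra

variable {A B A' B' : Type u} [NonUnitalCStarAlgebra A] [NonUnitalCStarAlgebra B]
  {NA : ∀ p : ℕ, Matrix (Fin p) (Fin p) A → ℝ} {NB : ∀ q : ℕ, Matrix (Fin q) (Fin q) B → ℝ}

theorem IsTensorCompletion.norm_tmul_le {X : Type u} [NonUnitalNormedRing X] [StarRing X]
    [NormedSpace ℂ X] [CompleteSpace X] {ι : A ⊗[ℂ] B →ₗ[ℂ] X}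
    (hX : IsTensorCompletion (osProjNorm NA NB) X ι) (hNA : ∀ p, IsCStarNorm (NA p))
    (hNB : ∀ q, IsCStarNorm (NB q)) (a : A) (b : B) : ‖ι (a ⊗ₜ b)‖ ≤ ‖a‖ * ‖b‖ := by
  rw [hX.norm_eq, ← (hNA 1).apply_of_const a, ← (hNB 1).apply_of_const b]
  exact osProjNorm_tmul_le (fun p ↦ (hNA p).nonneg) (fun q ↦ (hNB q).nonneg) a b

variable [NonUnitalCStarAlgebra A'] [NonUnitalCStarAlgebra B']
  {NA' : ∀ p : ℕ, Matrix (Fin p) (Fin p) A' → ℝ} {NB' : ∀ q : ℕ, Matrix (Fin q) (Fin q) B' → ℝ}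

theorem osProjNorm_starMap_le (hNA : ∀ p, IsCStarNorm (NA p)) (hNB : ∀ q, IsCStarNorm (NB q))
    (hNA' : ∀ p, IsCStarNorm (NA' p)) (hNB' : ∀ q, IsCStarNorm (NB' q))
    (π : A →⋆ₙₐ[ℂ] A') (ρ : B →⋆ₙₐ[ℂ] B') (u : A ⊗[ℂ] B) :
    osProjNorm NA' NB' (TensorProduct.map (π : A →ₗ[ℂ] A') (ρ : B →ₗ[ℂ] B') u) ≤
      osProjNorm NA NB u :=
  osProjNorm_map_le (fun p ↦ (hNA p).nonneg) (fun p ↦ (hNA' p).nonneg) (fun q ↦ (hNB' q).nonneg)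
    (fun p ↦ (hNA p).matrix_map_le (hNA' p) π) (fun q ↦ (hNB q).matrix_map_le (hNB' q) ρ) u

theorem exists_starMap_eq_and_osProjNorm_lt (hNA : ∀ p, IsCStarNorm (NA p))
    (hNB : ∀ q, IsCStarNorm (NB q)) (hNA' : ∀ p, IsCStarNorm (NA' p))
    (hNB' : ∀ q, IsCStarNorm (NB' q)) {π : A →⋆ₙₐ[ℂ] A'} {ρ : B →⋆ₙₐ[ℂ] B'}
    (hπ : Function.Surjective π) (hρ : Function.Surjective ρ) {u' : A' ⊗[ℂ] B'} {r : ℝ}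
    (hr : osProjNorm NA' NB' u' < r) :
    ∃ u, TensorProduct.map (π : A →ₗ[ℂ] A') (ρ : B →ₗ[ℂ] B') u = u' ∧ osProjNorm NA NB u < r :=
  exists_map_eq_and_osProjNorm_lt (fun p ↦ (hNA p).nonneg) (fun q ↦ (hNB q).nonneg)
    (fun p ↦ (hNA' p).nonneg) (fun p ↦ (hNA p).exists_matrix_map_eq_and_le (hNA' p) π hπ)
    (fun q ↦ (hNB q).exists_matrix_map_eq_and_le (hNB' q) ρ hρ) hr

end CStarAlgebra

section NormedAddCommGroup

variable {X X' : Type*} [NormedAddCommGroup X] [NormedAddCommGroup X']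

theorem isClosed_add_of_norm_le [CompleteSpace X] {P Q : AddSubgroup X}
    (hP : IsClosed (P : Set X)) (hQ : IsClosed (Q : Set X)) {C : ℝ} (hC : 0 < C)
    (h : ∀ x ∈ P ⊔ Q, ∃ y ∈ P, ∃ z ∈ Q, y + z = x ∧ ‖y‖ ≤ C * ‖x‖ ∧ ‖z‖ ≤ C * ‖x‖) :
    IsClosed ((P : Set X) + (Q : Set X)) := by
  have : CompleteSpace P := hP.completeSpace_coe
  have : CompleteSpace Q := hQ.completeSpace_coe
  let add : NormedAddGroupHom (P × Q) X :=
    (P.subtype.coprod Q.subtype).mkNormedAddGroupHom 2 fun g ↦ by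
      have hg := norm_add_le (g.1 : X) g.2
      have := norm_fst_le g
      have := norm_snd_le g
      simp only [AddMonoidHom.coprod_apply, AddSubgroup.subtype_apply, AddSubgroup.coe_norm] at *
      linarith
  have hadd : add.SurjectiveOnWith (P ⊔ Q) C := by
    intro x hx
    obtain ⟨y, hy, z, hz, hyz, hy_le, hz_le⟩ := h x hx
    exact ⟨(⟨y, hy⟩, ⟨z, hz⟩), hyz, max_le hy_le hz_le⟩
  rw [← closure_subset_iff_isClosed, ← AddSubgroup.add_normal]
  intro x hx
  obtain ⟨g, rfl, -⟩ := controlled_closure_of_complete hC one_pos hadd x hx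
  exact AddSubgroup.add_mem_sup g.1.2 g.2.2

theorem exists_add_eq_and_norm_le_of_tendsto {P Q : AddSubgroup X} {κ : Type*} {l : Filter κ}
    [l.NeBot] {T : κ → X →+ X} {C : ℝ} (hT : ∀ i x, ‖T i x‖ ≤ C * ‖x‖)
    (hTP : ∀ i x, T i x ∈ P) (hTQ : ∀ i, ∀ q ∈ Q, T i q ∈ Q)
    (hlim : ∀ p ∈ P, Tendsto (T · p) l (𝓝 p)) {x : X} (hx : x ∈ P ⊔ Q) :
    ∃ y ∈ P, ∃ z ∈ Q, y + z = x ∧ ‖y‖ ≤ (C + 2) * ‖x‖ ∧ ‖z‖ ≤ (C + 2) * ‖x‖ := by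
  obtain rfl | hx0 := eq_or_ne x 0
  · exact ⟨0, P.zero_mem, 0, Q.zero_mem, by simp⟩
  obtain ⟨p, hp, q, hq, rfl⟩ := AddSubgroup.mem_sup.1 hx
  obtain ⟨i, hi⟩ := (Metric.tendsto_nhds.1 (hlim p hp) ‖p + q‖ (norm_pos_iff.2 hx0)).exists
  rw [dist_eq_norm'] at hi
  have hsum : T i (p + q) + (p - T i p) + (q - T i q) = p + q := by rw [map_add]; abel
  have hy : ‖T i (p + q) + (p - T i p)‖ ≤ (C + 1) * ‖p + q‖ := by
    linarith [norm_add_le (T i (p + q)) (p - T i p), hT i (p + q)]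
  have hz : ‖q - T i q‖ ≤ (C + 2) * ‖p + q‖ := by
    rw [eq_sub_of_add_eq' hsum]
    linarith [norm_sub_le (p + q) (T i (p + q) + (p - T i p))]
  exact ⟨_, P.add_mem (hTP _ _) (P.sub_mem hp (hTP _ _)), _, Q.sub_mem hq (hTQ i q hq), hsum,
    hy.trans (by gcongr; norm_num), hz⟩

theorem isClosed_add_of_tendsto [CompleteSpace X] {P Q : AddSubgroup X}
    (hP : IsClosed (P : Set X)) (hQ : IsClosed (Q : Set X)) {κ : Type*} {l : Filter κ}
    [l.NeBot] {T : κ → X →+ X} {C : ℝ} (hC : 0 ≤ C) (hT : ∀ i x, ‖T i x‖ ≤ C * ‖x‖)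
    (hTP : ∀ i x, T i x ∈ P) (hTQ : ∀ i, ∀ q ∈ Q, T i q ∈ Q)
    (hlim : ∀ p ∈ P, Tendsto (T · p) l (𝓝 p)) :
    IsClosed ((P : Set X) + (Q : Set X)) :=
  isClosed_add_of_norm_le hP hQ (by positivity : 0 < C + 2) fun _ ↦
    exists_add_eq_and_norm_le_of_tendsto hT hTP hTQ hlim

theorem image_ball_eq_ball_of_dense [CompleteSpace X] {θ : X →+ X'} (hθ : ∀ x, ‖θ x‖ ≤ ‖x‖)
    {D : AddSubgroup X'} (hD : Dense (D : Set X'))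
    (hlift : ∀ y ∈ D, ∀ r, ‖y‖ < r → ∃ x, θ x = y ∧ ‖x‖ < r) (r : ℝ) :
    θ '' Metric.ball 0 r = Metric.ball 0 r := by
  refine Set.Subset.antisymm ?_ fun y hy ↦ ?_
  · rintro _ ⟨x, hx, rfl⟩
    rw [mem_ball_zero_iff] at hx ⊢
    exact (hθ x).trans_lt hx
  rw [mem_ball_zero_iff] at hy
  obtain ⟨δ, hδ, hlt⟩ := exists_pos_mul_lt (sub_pos.2 hy) (2 * ‖y‖)
  let f : NormedAddGroupHom X X' := θ.mkNormedAddGroupHom 1 fun x ↦ by simpa using hθ x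
  have hf : f.SurjectiveOnWith D (1 + δ) := by
    intro y hy
    obtain rfl | hy0 := eq_or_ne y 0
    · exact ⟨0, map_zero f, by simp⟩
    obtain ⟨x, hx, hlt⟩ := hlift y hy _
      (lt_mul_of_one_lt_left (norm_pos_iff.2 hy0) (lt_add_of_pos_right 1 hδ))
    exact ⟨x, hx, hlt.le⟩
  obtain ⟨x, hx, hle⟩ := controlled_closure_of_complete (by positivity) hδ hf y (hD y)
  exact ⟨x, by rw [mem_ball_zero_iff]; linarith, hx⟩

theorem setOf_map_eq_zero_eq_closure_image {E E' : Type*} [AddCommGroup E] [AddCommGroup E']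
    {ι : E →+ X} {ι' : E' →+ X'} {φ : E →+ E'} {θ : X →+ X'} (hι : DenseRange ι)
    (hcomm : ∀ u, θ (ι u) = ι' (φ u)) (hθ : ∀ x, ‖θ x‖ ≤ ‖x‖)
    (hlift : ∀ u' r, ‖ι' u'‖ < r → ∃ u, φ u = u' ∧ ‖ι u‖ < r) :
    {x | θ x = 0} = closure (ι '' {u | φ u = 0}) := by
  have hθ_cont : Continuous θ :=
    AddMonoidHomClass.continuous_of_bound θ 1 fun x ↦ by simpa using hθ x
  refine Set.Subset.antisymm (fun x hx ↦ Metric.mem_closure_iff.2 fun ε hε ↦ ?_)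
    (closure_minimal ?_ (isClosed_eq hθ_cont continuous_const))
  · obtain ⟨u, hu⟩ := Metric.denseRange_iff.1 hι x (ε / 2) (half_pos hε)
    rw [dist_eq_norm] at hu
    have hu' : ‖ι' (φ u)‖ < ε / 2 := by
      have := hθ (x - ι u)
      rw [map_sub, hx.out, zero_sub, norm_neg, hcomm] at this
      exact this.trans_lt hu
    obtain ⟨w, hw, hw_lt⟩ := hlift _ _ hu'
    refine ⟨ι (u - w), ⟨u - w, by simp [hw], rfl⟩, ?_⟩
    rw [dist_eq_norm, map_sub, ← sub_add]
    linarith [norm_add_le (x - ι u) (ι w)]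
  · rintro _ ⟨u, hu, rfl⟩
    simp [hcomm, hu.out]

end NormedAddCommGroup

theorem ker_tensorProductMap_eq_sup {R M M' N N' : Type*} [CommRing R] [AddCommGroup M]
    [Module R M] [AddCommGroup M'] [Module R M'] [AddCommGroup N] [Module R N] [AddCommGroup N']
    [Module R N'] {f : M →ₗ[R] M'} {g : N →ₗ[R] N'} (hf : Function.Surjective f)
    (hg : Function.Surjective g) :
    LinearMap.ker (TensorProduct.map f g) =
      Submodule.map₂ (TensorProduct.mk R M N) ⊤ (LinearMap.ker g) ⊔
        Submodule.map₂ (TensorProduct.mk R M N) (LinearMap.ker f) ⊤ := by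
  rw [TensorProduct.map_ker f.exact_subtype_ker_map hf g.exact_subtype_ker_map hg,
    LinearMap.lTensor, LinearMap.rTensor, TensorProduct.range_map, TensorProduct.range_map]
  simp only [LinearMap.range_id, Submodule.range_subtype]

theorem coe_topologicalClosure_sup_eq_add {R X : Type*} [Semiring R] [TopologicalSpace X]
    [AddCommMonoid X] [Module R X] [ContinuousAdd X] [ContinuousConstSMul R X]
    {P Q : Submodule R X}
    (h : IsClosed ((P.topologicalClosure : Set X) + (Q.topologicalClosure : Set X))) :
    ((P ⊔ Q).topologicalClosure : Set X) =
      (P.topologicalClosure : Set X) + (Q.topologicalClosure : Set X) := by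
  refine Set.Subset.antisymm (closure_minimal ?_ h) ?_
  · change ((P ⊔ Q : Submodule R X) : Set X) ⊆ _
    rw [Submodule.coe_sup]
    exact Set.add_subset_add subset_closure subset_closure
  · rw [← Submodule.coe_sup]
    exact SetLike.coe_subset_coe.2 (sup_le (Submodule.topologicalClosure_mono le_sup_left)
      (Submodule.topologicalClosure_mono le_sup_right))

section TensorSubmodule

variable {A B X : Type*} [AddCommGroup A] [Module ℂ A] [AddCommGroup B] [Module ℂ B]
  [NormedAddCommGroup X] [NormedSpace ℂ X]

/-- The closed subspace `S ⊗̂ T` of a completion `ι : A ⊗ B → X`, for subspaces `S` of `A` and `T`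
of `B`; this is `tensorIdeal ι S T` with its linear structure. -/
def tensorSubmodule (ι : A ⊗[ℂ] B →ₗ[ℂ] X) (S : Submodule ℂ A) (T : Submodule ℂ B) :
    Submodule ℂ X :=
  ((Submodule.map₂ (TensorProduct.mk ℂ A B) S T).map ι).topologicalClosure

theorem coe_tensorSubmodule {A B X : Type u} [NonUnitalRing A] [StarRing A] [Module ℂ A]
    [NonUnitalRing B] [StarRing B] [Module ℂ B] [NonUnitalNormedRing X] [StarRing X]
    [NormedSpace ℂ X] [CompleteSpace X] (ι : A ⊗[ℂ] B →ₗ[ℂ] X) (S : Submodule ℂ A)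
    (T : Submodule ℂ B) : (tensorSubmodule ι S T : Set X) = tensorIdeal ι S T := by
  rw [tensorSubmodule, Submodule.map₂_eq_span_image2]
  rfl

variable {ι : A ⊗[ℂ] B →ₗ[ℂ] X} {S : Submodule ℂ A} {T : Submodule ℂ B}

theorem isClosed_tensorSubmodule : IsClosed (tensorSubmodule ι S T : Set X) :=
  Submodule.isClosed_topologicalClosure _

theorem tmul_mem_tensorSubmodule {a : A} {b : B} (ha : a ∈ S) (hb : b ∈ T) :
    ι (a ⊗ₜ b) ∈ tensorSubmodule ι S T :=
  Submodule.le_topologicalClosure _ ⟨_, Submodule.apply_mem_map₂ _ ha hb, rfl⟩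

theorem tensorSubmodule_top_top (hι : DenseRange ι) : tensorSubmodule ι ⊤ ⊤ = ⊤ := by
  rw [tensorSubmodule, TensorProduct.map₂_mk_top_top_eq_top, Submodule.map_top,
    ← Submodule.dense_iff_topologicalClosure_eq_top]
  exact hι

theorem tensorSubmodule_toAddSubmonoid_le {K : AddSubmonoid X} (hK : IsClosed (K : Set X))
    (h : ∀ a ∈ S, ∀ b ∈ T, ι (a ⊗ₜ b) ∈ K) : (tensorSubmodule ι S T).toAddSubmonoid ≤ K := by
  refine closure_minimal ?_ hK
  rintro _ ⟨u, hu, rfl⟩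
  rw [Submodule.map₂_eq_span_image2] at hu
  induction hu using Submodule.closure_induction with
  | zero => rw [_root_.map_zero]; exact K.zero_mem
  | add u v _ _ hu hv => rw [map_add]; exact K.add_mem hu hv
  | smul_mem c u hu =>
    obtain ⟨a, ha, b, hb, rfl⟩ := hu
    exact h _ (S.smul_mem c ha) b hb

end TensorSubmodule

theorem mul_tmul_mem_tensorSubmodule {A B X : Type*} [NonUnitalRing A] [Module ℂ A]
    [NonUnitalRing B] [Module ℂ B] [NonUnitalNormedRing X] [NormedSpace ℂ X]
    {ι : A ⊗[ℂ] B →ₗ[ℂ] X} {S S' : Submodule ℂ A} {T T' : Submodule ℂ B}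
    (hmul : ∀ a c b d, ι (a ⊗ₜ b) * ι (c ⊗ₜ d) = ι ((a * c) ⊗ₜ (b * d)))
    {c : A} {d : B} (hc : ∀ a ∈ S, a * c ∈ S') (hd : ∀ b ∈ T, b * d ∈ T') {x : X}
    (hx : x ∈ tensorSubmodule ι S T) : x * ι (c ⊗ₜ d) ∈ tensorSubmodule ι S' T' := by
  let K := (tensorSubmodule ι S' T').toAddSubmonoid.comap (AddMonoidHom.mulRight (ι (c ⊗ₜ d)))
  have hK : IsClosed (K : Set X) := isClosed_tensorSubmodule.preimage (continuous_mul_const _)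
  refine tensorSubmodule_toAddSubmonoid_le hK (fun a ha b hb ↦ ?_) hx
  change ι (a ⊗ₜ b) * ι (c ⊗ₜ d) ∈ tensorSubmodule ι S' T'
  rw [hmul]
  exact tmul_mem_tensorSubmodule (hc a ha) (hd b hb)

theorem continuous_tmul_of_norm_le {A B X : Type*} [NormedAddCommGroup A] [NormedSpace ℂ A]
    [NormedAddCommGroup B] [NormedSpace ℂ B] [NormedAddCommGroup X] [NormedSpace ℂ X]
    {ι : A ⊗[ℂ] B →ₗ[ℂ] X} (hι : ∀ a b, ‖ι (a ⊗ₜ b)‖ ≤ ‖a‖ * ‖b‖) :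
    Continuous fun z : A × B ↦ ι (z.1 ⊗ₜ z.2) :=
  (LinearMap.mkContinuous₂ ((TensorProduct.mk ℂ A B).compr₂ ι) 1 fun a b ↦ by
    simpa using hι a b).continuous₂

theorem tendsto_mul_tmul_of_mem_tensorSubmodule {A B X : Type*} [NonUnitalNormedRing A]
    [NormedSpace ℂ A] [NonUnitalNormedRing B] [NormedSpace ℂ B] [NonUnitalNormedRing X]
    [NormedSpace ℂ X] {ι : A ⊗[ℂ] B →ₗ[ℂ] X} {S : Submodule ℂ A} {T : Submodule ℂ B}
    (hmul : ∀ a c b d, ι (a ⊗ₜ b) * ι (c ⊗ₜ d) = ι ((a * c) ⊗ₜ (b * d)))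
    (hι : ∀ a b, ‖ι (a ⊗ₜ b)‖ ≤ ‖a‖ * ‖b‖) {κ : Type*} {l : Filter κ} {c : κ → A} {d : κ → B}
    (hcd : ∀ i, ‖ι (c i ⊗ₜ d i)‖ ≤ 1)
    (hS : ∀ a ∈ S, Tendsto (a * c ·) l (𝓝 a)) (hT : ∀ b ∈ T, Tendsto (b * d ·) l (𝓝 b)) {x : X}
    (hx : x ∈ tensorSubmodule ι S T) :
    Tendsto (fun i ↦ x * ι (c i ⊗ₜ d i)) l (𝓝 x) := by
  let K : AddSubmonoid X :=
    { carrier := {x | Tendsto (fun i ↦ x * ι (c i ⊗ₜ d i)) l (𝓝 x)}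
      zero_mem' := by simpa using tendsto_const_nhds
      add_mem' := fun hx hy ↦ by simpa only [Set.mem_ofPred_eq, add_mul] using hx.out.add hy.out }
  have hlip : UniformEquicontinuous fun i (x : X) ↦ x * ι (c i ⊗ₜ d i) :=
    LipschitzWith.uniformEquicontinuous _ 1 fun i ↦ .of_dist_le_mul fun x y ↦ by
      rw [dist_eq_norm, dist_eq_norm, ← sub_mul, NNReal.coe_one, one_mul]
      exact (norm_mul_le _ _).trans (mul_le_of_le_one_right (norm_nonneg _) (hcd i))
  have hK : IsClosed (K : Set X) :=
    hlip.equicontinuous.isClosed_setOfPred_tendsto continuous_id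
  refine tensorSubmodule_toAddSubmonoid_le hK (fun a ha b hb ↦ ?_) hx
  change Tendsto (fun i ↦ ι (a ⊗ₜ b) * ι (c i ⊗ₜ d i)) l (𝓝 (ι (a ⊗ₜ b)))
  simp only [hmul]
  exact ((continuous_tmul_of_norm_le hι).tendsto (a, b)).comp ((hS a ha).prodMk_nhds (hT b hb))

/-- Right multiplication by `c ⊗ d`, with `c` and `d` running through approximate units of `A` and
of `T`, maps `X` into `A ⊗̂ T`, preserves `S ⊗̂ B` and converges to the identity on `A ⊗̂ T`. -/
theorem isClosed_tensorSubmodule_add {A B X : Type u} [NonUnitalCStarAlgebra A]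
    [NonUnitalCStarAlgebra B] [NonUnitalNormedRing X] [StarRing X] [NormedSpace ℂ X]
    [CompleteSpace X] {ν : A ⊗[ℂ] B → ℝ} {ι : A ⊗[ℂ] B →ₗ[ℂ] X}
    (hX : IsTensorCompletion ν X ι) (hι : ∀ a b, ‖ι (a ⊗ₜ b)‖ ≤ ‖a‖ * ‖b‖)
    {S : Submodule ℂ A} (hS : ∀ s ∈ S, ∀ a, s * a ∈ S) {T : NonUnitalStarSubalgebra ℂ B}
    (hT_closed : IsClosed (T : Set B)) (hT : ∀ b, ∀ t ∈ T, b * t ∈ T) :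
    IsClosed ((tensorSubmodule ι ⊤ T.toSubmodule : Set X) + (tensorSubmodule ι S ⊤ : Set X)) := by
  obtain ⟨l, _, hl⟩ := exists_filter_tendsto_mul (⊤ : NonUnitalStarSubalgebra ℂ A) (by simp)
  obtain ⟨m, _, hm⟩ := exists_filter_tendsto_mul T hT_closed
  have hunit (i : {c : A // c ∈ (⊤ : NonUnitalStarSubalgebra ℂ A) ∧ ‖c‖ ≤ 1} ×
      {d : B // d ∈ T ∧ ‖d‖ ≤ 1}) : ‖ι (i.1.1 ⊗ₜ i.2.1)‖ ≤ 1 :=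
    (hι _ _).trans (mul_le_one₀ i.1.2.2 (norm_nonneg _) i.2.2.2)
  refine isClosed_add_of_tendsto (P := (tensorSubmodule ι ⊤ T.toSubmodule).toAddSubgroup)
    (Q := (tensorSubmodule ι S ⊤).toAddSubgroup) (l := l ×ˢ m)
    (T := fun i ↦ AddMonoidHom.mulRight (ι (i.1.1 ⊗ₜ i.2.1)))
    isClosed_tensorSubmodule isClosed_tensorSubmodule zero_le_one (fun i x ↦ ?_) (fun i x ↦ ?_)
    (fun i x hx ↦ ?_) (fun x hx ↦ ?_)
  · rw [one_mul]
    exact (norm_mul_le _ _).trans (mul_le_of_le_one_right (norm_nonneg _) (hunit i))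
  · have hx : x ∈ tensorSubmodule ι ⊤ ⊤ := tensorSubmodule_top_top hX.dense ▸ Submodule.mem_top
    exact mul_tmul_mem_tensorSubmodule hX.mul_tmul (fun _ _ ↦ Submodule.mem_top)
      (fun b _ ↦ hT b _ i.2.2.1) hx
  · exact mul_tmul_mem_tensorSubmodule hX.mul_tmul (fun s hs ↦ hS s hs _)
      (fun _ _ ↦ Submodule.mem_top) hx
  · exact tendsto_mul_tmul_of_mem_tensorSubmodule hX.mul_tmul hι hunit
      (fun a _ ↦ (hl a trivial).comp tendsto_fst) (fun b hb ↦ (hm b hb).comp tendsto_snd) hx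

namespace IsTensorCompletion

variable {A B A' B' X X' : Type u}
  [NonUnitalRing A] [StarRing A] [Module ℂ A] [NonUnitalRing B] [StarRing B] [Module ℂ B]
  [NonUnitalRing A'] [StarRing A'] [Module ℂ A'] [NonUnitalRing B'] [StarRing B'] [Module ℂ B']
  [NonUnitalNormedRing X] [StarRing X] [NormedSpace ℂ X] [CompleteSpace X]
  [NonUnitalNormedRing X'] [StarRing X'] [NormedSpace ℂ X'] [CompleteSpace X']
  {ν : A ⊗[ℂ] B → ℝ} {ν' : A' ⊗[ℂ] B' → ℝ} {ι : A ⊗[ℂ] B →ₗ[ℂ] X} {ι' : A' ⊗[ℂ] B' →ₗ[ℂ] X'}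
  {f : A →ₗ[ℂ] A'} {g : B →ₗ[ℂ] B'} {θ : X →L[ℂ] X'}

theorem norm_apply_le (hX : IsTensorCompletion ν X ι) (hX' : IsTensorCompletion ν' X' ι')
    (hθ : ∀ u, θ (ι u) = ι' (TensorProduct.map f g u))
    (hle : ∀ u, ν' (TensorProduct.map f g u) ≤ ν u) (x : X) : ‖θ x‖ ≤ ‖x‖ := by
  refine hX.dense.induction_on x (isClosed_le (by fun_prop) (by fun_prop)) fun u ↦ ?_
  rw [hθ, hX'.norm_eq, hX.norm_eq]
  exact hle u

theorem image_ball_eq_ball (hX : IsTensorCompletion ν X ι) (hX' : IsTensorCompletion ν' X' ι')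
    (hθ : ∀ u, θ (ι u) = ι' (TensorProduct.map f g u))
    (hle : ∀ u, ν' (TensorProduct.map f g u) ≤ ν u)
    (hlift : ∀ u' r, ν' u' < r → ∃ u, TensorProduct.map f g u = u' ∧ ν u < r) (r : ℝ) :
    θ '' Metric.ball 0 r = Metric.ball 0 r := by
  refine image_ball_eq_ball_of_dense (θ := (θ : X →+ X')) (norm_apply_le hX hX' hθ hle)
    (D := ι'.range.toAddSubgroup) hX'.dense ?_ r
  rintro _ ⟨u', rfl⟩ r hr
  rw [hX'.norm_eq] at hr
  obtain ⟨u, rfl, hu⟩ := hlift u' r hr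
  exact ⟨ι u, hθ u, by rwa [hX.norm_eq]⟩

theorem setOf_apply_eq_zero_eq_topologicalClosure (hX : IsTensorCompletion ν X ι)
    (hX' : IsTensorCompletion ν' X' ι')
    (hθ : ∀ u, θ (ι u) = ι' (TensorProduct.map f g u))
    (hle : ∀ u, ν' (TensorProduct.map f g u) ≤ ν u)
    (hlift : ∀ u' r, ν' u' < r → ∃ u, TensorProduct.map f g u = u' ∧ ν u < r) :
    {x | θ x = 0} = ((TensorProduct.map f g).ker.map ι).topologicalClosure := by
  refine setOf_map_eq_zero_eq_closure_image (ι := ι.toAddMonoidHom) (ι' := ι'.toAddMonoidHom)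
    (φ := (TensorProduct.map f g).toAddMonoidHom) (θ := (θ : X →+ X')) hX.dense hθ
    (norm_apply_le hX hX' hθ hle) fun u' r hr ↦ ?_
  obtain ⟨u, hu, hlt⟩ := hlift u' r ((hX'.norm_eq u').symm.trans_lt hr)
  exact ⟨u, hu, (hX.norm_eq u).trans_lt hlt⟩

end IsTensorCompletion

/-- For closed ideals `I ⊆ A`, `J ⊆ B` (with `A/I`, `B/J` realized as
C⋆-algebras `A'`, `B'` via the surjective `*`-homomorphisms `π`, `ρ` with kernels `I`, `J`),
the induced map `π ⊗̂ ρ : A ⊗̂ B → (A/I) ⊗̂ (B/J)` (realized as `θ : X → X'`) is a quotient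
map: it carries the open unit ball of `A ⊗̂ B` onto that of `(A/I) ⊗̂ (B/J)`; and its kernel
is `A ⊗̂ J + I ⊗̂ B`. -/
theorem quotient_tensor_map {A B A' B' X X' : Type u}
    [NonUnitalCStarAlgebra A] [NonUnitalCStarAlgebra B]
    [NonUnitalCStarAlgebra A'] [NonUnitalCStarAlgebra B']
    [NonUnitalNormedRing X] [StarRing X] [NormedSpace ℂ X] [CompleteSpace X]
    [NonUnitalNormedRing X'] [StarRing X'] [NormedSpace ℂ X'] [CompleteSpace X']
    (NA : ∀ p : ℕ, Matrix (Fin p) (Fin p) A → ℝ)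
    (NB : ∀ q : ℕ, Matrix (Fin q) (Fin q) B → ℝ)
    (NA' : ∀ p : ℕ, Matrix (Fin p) (Fin p) A' → ℝ)
    (NB' : ∀ q : ℕ, Matrix (Fin q) (Fin q) B' → ℝ)
    (hNA : ∀ p, IsCStarNorm (NA p)) (hNB : ∀ q, IsCStarNorm (NB q))
    (hNA' : ∀ p, IsCStarNorm (NA' p)) (hNB' : ∀ q, IsCStarNorm (NB' q))
    (ι : A ⊗[ℂ] B →ₗ[ℂ] X) (hX : IsTensorCompletion (osProjNorm NA NB) X ι)
    (ι' : A' ⊗[ℂ] B' →ₗ[ℂ] X') (hX' : IsTensorCompletion (osProjNorm NA' NB') X' ι')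
    (I : TwoSidedIdeal A) (J : TwoSidedIdeal B)
    (hI : IsClosed (I : Set A)) (hJ : IsClosed (J : Set B))
    (π : A →⋆ₙₐ[ℂ] A') (ρ : B →⋆ₙₐ[ℂ] B')
    (hπ : Function.Surjective π) (hρ : Function.Surjective ρ)
    (hkerπ : ∀ a, π a = 0 ↔ a ∈ I) (hkerρ : ∀ b, ρ b = 0 ↔ b ∈ J)
    (θ : X →L[ℂ] X')
    (hθ : ∀ (a : A) (b : B), θ (ι (a ⊗ₜ[ℂ] b)) = ι' (π a ⊗ₜ[ℂ] ρ b)) :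
    θ '' (Metric.ball (0 : X) 1) = Metric.ball (0 : X') 1 ∧
    {x : X | θ x = 0} =
      tensorIdeal ι (Set.univ : Set A) (J : Set B) +
        tensorIdeal ι (I : Set A) (Set.univ : Set B) := by
  have hθι u := DFunLike.congr_fun (TensorProduct.ext' (g := θ.toLinearMap ∘ₗ ι)
    (h := ι' ∘ₗ TensorProduct.map (π : A →ₗ[ℂ] A') (ρ : B →ₗ[ℂ] B')) hθ) u
  have hle := osProjNorm_starMap_le hNA hNB hNA' hNB' π ρ
  have hlift u' r := exists_starMap_eq_and_osProjNorm_lt hNA hNB hNA' hNB' hπ hρ (u' := u') (r := r)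
  refine ⟨hX.image_ball_eq_ball hX' hθι hle hlift 1, ?_⟩
  have hI_eq : (I : Set A) = (π : A →ₗ[ℂ] A').ker := Set.ext fun a ↦ (hkerπ a).symm
  have hJ_eq : (J : Set B) = (ρ : B →ₗ[ℂ] B').ker := Set.ext fun b ↦ (hkerρ b).symm
  have hclosed := isClosed_tensorSubmodule_add hX (hX.norm_tmul_le hNA hNB)
    (S := (π : A →ₗ[ℂ] A').ker) (T := NonUnitalStarAlgHom.equalizer ρ 0)
    (fun s (hs : π s = 0) a ↦ show π (s * a) = 0 by rw [map_mul, hs, zero_mul])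
    (hJ_eq ▸ hJ) (fun b t (ht : ρ t = 0) ↦ show ρ (b * t) = 0 by rw [map_mul, ht, mul_zero])
  rw [hX.setOf_apply_eq_zero_eq_topologicalClosure hX' hθι hle hlift,
    ker_tensorProductMap_eq_sup hπ hρ, Submodule.map_sup, hI_eq, hJ_eq,
    ← Submodule.top_coe (R := ℂ), ← Submodule.top_coe (R := ℂ), ← coe_tensorSubmodule,
    ← coe_tensorSubmodule]
  exact coe_topologicalClosure_sup_eq_add hclosed

end
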